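/- (Theorem 1.) Let J ≥ 2 and let p₁ and p₀ be probability vectors of length J satisfying stochastic dominance with p₁ᵀp₀ < 1. Then there exists a lower triangular J×J probability matrix P₊ with row-sum vector p₁ and column-sum vector p₀ such that κ(P₊) = (∑_{k=0}^{J−1} min(p_{k+}, p_{+k}) − p₁ᵀp₀)/(1 − p₁ᵀp₀), and for every J×J probability matrix P with row-sum vector p₁ and column-sum vector p₀ one has κ(P) ≤ κ(P₊). -/

import Mathlib

/-!
The diagonal entry `P k k` is at most both the `k`-th row sum and the `k`-th column sum, so the trace
of any coupling is at most `∑ k, min (p1 k) (p0 k)`; as the margins are fixed, `kappa` increases with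
the trace. It remains to attain this bound by a lower triangular matrix.

Put `min (p1 k) (p0 k)` on the diagonal. The leftover margins `a = p1 - min` and `b = p0 - min` are
nonnegative, have equal mass, and inherit stochastic dominance, i.e. the cumulative sums satisfy
`A ≤ B`. The monotone (comonotone) coupling of `a` and `b`, whose joint distribution function is
`min (A k) (B l)`, is then lower triangular (`exists_lowerTriangular_coupling`). It has zero diagonal,
because at each index `a` or `b` vanishes.
-/

noncomputable section

open Finset

/-- Row-sum vector of a J×J real matrix (as a function). -/
def rowSum {J : ℕ} (P : Fin J → Fin J → ℝ) (k : Fin J) : ℝ := ∑ l, P k l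

/-- Column-sum vector of a J×J real matrix (as a function). -/
def colSum {J : ℕ} (P : Fin J → Fin J → ℝ) (l : Fin J) : ℝ := ∑ k, P k l

/-- A J×J probability matrix: nonnegative entries summing to 1. -/
def IsProbMatrix {J : ℕ} (P : Fin J → Fin J → ℝ) : Prop :=
  (∀ k l, 0 ≤ P k l) ∧ ∑ k, ∑ l, P k l = 1

/-- A probability vector of length J: nonnegative entries summing to 1. -/
def IsProbVec {J : ℕ} (p : Fin J → ℝ) : Prop :=
  (∀ k, 0 ≤ p k) ∧ ∑ k, p k = 1

/-- Stochastic dominance of p1 over p0: for all j = 1,…,J−1 the upper-tail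
sum of p1 is at least that of p0. -/
def StochDom {J : ℕ} (p1 p0 : Fin J → ℝ) : Prop :=
  ∀ j : Fin J, 1 ≤ (j : ℕ) →
    ∑ l ∈ univ.filter (fun l => j ≤ l), p0 l ≤ ∑ k ∈ univ.filter (fun k => j ≤ k), p1 k

/-- Inner product p₁ᵀp₀ of two vectors. -/
def ip {J : ℕ} (p1 p0 : Fin J → ℝ) : ℝ := ∑ k, p1 k * p0 k

/-- Cohen's kappa of a J×J probability matrix. -/
def kappa {J : ℕ} (P : Fin J → Fin J → ℝ) : ℝ :=
  ((∑ k, P k k) - ip (rowSum P) (colSum P)) / (1 - ip (rowSum P) (colSum P))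

/-- Cumulative sum: the total of the first `n` entries of `a` (of all of them if `J ≤ n`). -/
def cumSum {J : ℕ} (a : Fin J → ℝ) (n : ℕ) : ℝ := ∑ i : Fin J, if (i : ℕ) < n then a i else 0

lemma cumSum_zero {J : ℕ} (a : Fin J → ℝ) : cumSum a 0 = 0 := by simp [cumSum]

lemma cumSum_top {J : ℕ} (a : Fin J → ℝ) : cumSum a J = ∑ i, a i := by simp [cumSum]

lemma cumSum_succ {J : ℕ} (a : Fin J → ℝ) (k : Fin J) :
    cumSum a (k + 1) = cumSum a k + a k := by
  have h : a k = ∑ i : Fin J, if i = k then a i else 0 := by simp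
  rw [h, cumSum, cumSum, ← sum_add_distrib]
  refine sum_congr rfl fun i _ => ?_
  simp only [Fin.ext_iff]
  grind

lemma cumSum_mono {J : ℕ} {a : Fin J → ℝ} (ha : ∀ k, 0 ≤ a k) : Monotone (cumSum a) := by
  intro m n hmn
  refine sum_le_sum fun i _ => ?_
  have := ha i
  grind

lemma cumSum_add_tail {J : ℕ} (a : Fin J → ℝ) (j : Fin J) :
    cumSum a j + ∑ k ∈ univ.filter (fun k => j ≤ k), a k = ∑ k, a k := by
  rw [cumSum, sum_filter, ← sum_add_distrib]
  refine sum_congr rfl fun i _ => ?_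
  simp only [Fin.le_def]
  grind

lemma cumSum_sub {J : ℕ} (a b : Fin J → ℝ) (n : ℕ) :
    cumSum (fun k => a k - b k) n = cumSum a n - cumSum b n := by
  rw [cumSum, cumSum, cumSum, ← sum_sub_distrib]
  refine sum_congr rfl fun i _ => ?_
  grind

lemma sum_fin_telescope (J : ℕ) (f : ℕ → ℝ) :
    ∑ l : Fin J, (f (l + 1) - f l) = f J - f 0 := by
  rw [Fin.sum_univ_eq_sum_range (fun l => f (l + 1) - f l), sum_range_sub]

/-- The mixed difference of `min` over a rectangle is nonnegative: `min` is supermodular. -/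
lemma min_supermodular {x x' y y' : ℝ} (hx : x ≤ x') (hy : y ≤ y') :
    0 ≤ (min x' y' - min x' y) - (min x y' - min x y) := by
  grind

/-- Nonnegative vectors of equal mass whose cumulative sums are ordered have a lower triangular
coupling: the monotone one, with joint distribution function `min (A k) (B l)`. -/
lemma exists_lowerTriangular_coupling {J : ℕ} (a b : Fin J → ℝ) (ha : ∀ k, 0 ≤ a k)
    (hb : ∀ k, 0 ≤ b k) (hsum : ∑ k, a k = ∑ k, b k)
    (hdom : ∀ j : Fin J, cumSum a j ≤ cumSum b j) :
    ∃ Q : Fin J → Fin J → ℝ, (∀ k l, 0 ≤ Q k l) ∧ (∀ k l, k < l → Q k l = 0) ∧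
      (∀ k, ∑ l, Q k l = a k) ∧ (∀ l, ∑ k, Q k l = b l) := by
  have mA := cumSum_mono ha
  have mB := cumSum_mono hb
  have hJ : cumSum a J = cumSum b J := by rw [cumSum_top, cumSum_top, hsum]
  let F : ℕ → ℕ → ℝ := fun m n => min (cumSum a m) (cumSum b n)
  have top_right : ∀ m ≤ J, F m J = cumSum a m := fun m hm => min_eq_left (hJ ▸ mA hm)
  have top_left : ∀ n ≤ J, F J n = cumSum b n := fun n hn => min_eq_right (hJ ▸ mB hn)
  have zero_right : ∀ m, F m 0 = 0 := fun m => by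
    have := mA (Nat.zero_le m)
    rw [cumSum_zero] at this
    simp [F, cumSum_zero, this]
  have zero_left : ∀ n, F 0 n = 0 := fun n => by
    have := mB (Nat.zero_le n)
    rw [cumSum_zero] at this
    simp [F, cumSum_zero, this]
  refine ⟨fun k l => (F (k + 1) (l + 1) - F (k + 1) l) - (F k (l + 1) - F k l),
    fun k l => min_supermodular (mA (Nat.le_succ _)) (mB (Nat.le_succ _)), ?_, ?_, ?_⟩
  · intro k l hkl
    -- Above the diagonal `A (k + 1) ≤ A l ≤ B l`, so `F` does not depend on its second argument.
    have e1 : cumSum a (k + 1) ≤ cumSum b l := (mA (Nat.succ_le_of_lt hkl)).trans (hdom l)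
    have e2 : cumSum a k ≤ cumSum a (k + 1) := mA (Nat.le_succ _)
    have e3 : cumSum b l ≤ cumSum b (l + 1) := mB (Nat.le_succ _)
    simp only [F]
    grind
  · intro k
    rw [sum_sub_distrib, sum_fin_telescope J (F (k + 1)), sum_fin_telescope J (F k),
      top_right _ k.isLt, top_right _ k.isLt.le, zero_right, zero_right, cumSum_succ]
    ring
  · intro l
    have h : ∀ k : Fin J, (F (k + 1) (l + 1) - F (k + 1) l) - (F k (l + 1) - F k l)
        = (F (k + 1) (l + 1) - F k (l + 1)) - (F (k + 1) l - F k l) := fun k => by ring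
    rw [sum_congr rfl fun k _ => h k, sum_sub_distrib,
      sum_fin_telescope J (fun m => F m (l + 1)), sum_fin_telescope J (fun m => F m l),
      top_left _ l.isLt, top_left _ l.isLt.le, zero_left, zero_left, cumSum_succ]
    ring

/-- Theorem 1: under stochastic dominance there is a lower
triangular probability matrix P₊ with the given marginals attaining the upper
bound of kappa, and every probability matrix with these marginals has
kappa ≤ kappa(P₊). -/
theorem kappa_max (J : ℕ) (hJ : 2 ≤ J) (p1 p0 : Fin J → ℝ)
    (h1 : IsProbVec p1) (h0 : IsProbVec p0) (hsd : StochDom p1 p0)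
    (hip : ip p1 p0 < 1) :
    ∃ Pp : Fin J → Fin J → ℝ, IsProbMatrix Pp ∧
      (∀ k l : Fin J, k < l → Pp k l = 0) ∧
      (∀ k, rowSum Pp k = p1 k) ∧ (∀ l, colSum Pp l = p0 l) ∧
      kappa Pp = ((∑ k, min (p1 k) (p0 k)) - ip p1 p0) / (1 - ip p1 p0) ∧
      ∀ P : Fin J → Fin J → ℝ, IsProbMatrix P →
        (∀ k, rowSum P k = p1 k) → (∀ l, colSum P l = p0 l) →
        kappa P ≤ kappa Pp := by
  have hdom : ∀ j : Fin J, cumSum p1 j ≤ cumSum p0 j := by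
    intro j
    -- `StochDom` says nothing at `j = 0`, where both cumulative sums vanish.
    rcases Nat.eq_zero_or_pos (j : ℕ) with hj | hj
    · rw [hj, cumSum_zero, cumSum_zero]
    · have := hsd j hj
      have e1 := cumSum_add_tail p1 j
      have e0 := cumSum_add_tail p0 j
      rw [h1.2] at e1
      rw [h0.2] at e0
      linarith
  obtain ⟨Q, Qnn, Qtri, Qrow, Qcol⟩ := exists_lowerTriangular_coupling
    (fun k => p1 k - min (p1 k) (p0 k)) (fun k => p0 k - min (p1 k) (p0 k))
    (fun k => sub_nonneg.2 (min_le_left _ _)) (fun k => sub_nonneg.2 (min_le_right _ _))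
    (by rw [sum_sub_distrib, sum_sub_distrib, h1.2, h0.2])
    (fun j => by
      rw [cumSum_sub p1 fun k => min (p1 k) (p0 k), cumSum_sub p0 fun k => min (p1 k) (p0 k)]
      linarith [hdom j])
  have Qdiag : ∀ k, Q k k = 0 := by
    intro k
    have hr : Q k k ≤ p1 k - min (p1 k) (p0 k) :=
      Qrow k ▸ single_le_sum (fun l _ => Qnn k l) (mem_univ k)
    have hc : Q k k ≤ p0 k - min (p1 k) (p0 k) :=
      Qcol k ▸ single_le_sum (f := fun i => Q i k) (fun i _ => Qnn i k) (mem_univ k)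
    have := Qnn k k
    grind
  let Pp : Fin J → Fin J → ℝ := fun k l => (if k = l then min (p1 k) (p0 k) else 0) + Q k l
  have hrow : ∀ k, rowSum Pp k = p1 k := by
    intro k
    simp only [rowSum, Pp, sum_add_distrib, Qrow, sum_ite_eq, mem_univ, if_true]
    ring
  have hcol : ∀ l, colSum Pp l = p0 l := by
    intro l
    simp only [colSum, Pp, sum_add_distrib, Qcol, sum_ite_eq', mem_univ, if_true]
    ring
  have hkap : kappa Pp = ((∑ k, min (p1 k) (p0 k)) - ip p1 p0) / (1 - ip p1 p0) := by
    rw [kappa, funext hrow, funext hcol]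
    simp [Pp, Qdiag]
  refine ⟨Pp, ⟨fun k l => ?_, ?_⟩, fun k l hkl => ?_, hrow, hcol, hkap, ?_⟩
  · have := Qnn k l
    have := le_min (h1.1 k) (h0.1 k)
    simp only [Pp]
    split_ifs <;> linarith
  · rw [← h1.2]
    exact sum_congr rfl fun k _ => hrow k
  · simp [Pp, hkl.ne, Qtri k l hkl]
  · intro P hP hr hc
    rw [hkap, kappa, funext hr, funext hc]
    have hpos : 0 ≤ 1 - ip p1 p0 := by linarith
    have htr : ∑ k, P k k ≤ ∑ k, min (p1 k) (p0 k) := by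
      refine sum_le_sum fun k _ => le_min ?_ ?_
      · exact hr k ▸ single_le_sum (fun l _ => hP.1 k l) (mem_univ k)
      · exact hc k ▸ single_le_sum (f := fun i => P i k) (fun i _ => hP.1 i k) (mem_univ k)
    gcongr
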